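/- arXiv:1805.07723 — 3 statements merged into one kernel-verified Lean document; each statement's English description precedes it below -/
import Mathlib

section
/- (Cost-weighted two-point risk bound.) Let Θ be a finite parameter space, ρ : Θ × Θ → ℝ₊ a pseudometric, and for each θ ∈ Θ let P_θⁿ be the n-fold product of a probability measure P_θ on an observation space O. Fix c ∈ (0,1) and write c̄ := 1−c. Then for any two parameters θ ≠ θ′ and any randomized estimator θ̂ (a Markov kernel from Oⁿ to Θ), c · E_{O ∼ P_θⁿ} E_{θ̃ ∼ θ̂(O)}[ρ(θ, θ̃)] + c̄ · E_{O ∼ P_{θ′}ⁿ} E_{θ̃ ∼ θ̂(O)}[ρ(θ′, θ̃)] ≥ ρ(θ, θ′) · ( min(c, c̄) − I_{f_c}(P_θⁿ, P_{θ′}ⁿ) ). -/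
open MeasureTheory ProbabilityTheory

/-- The `c`-primitive `f`-divergence in the form
`I_{f_c}(P,Q) = min(c, 1−c) − ∫ min((1−c)·dQ, c·dP)`, the integral being taken of the
densities with respect to the common dominating measure `P + Q`. -/
noncomputable def Ifc {Ω : Type*} [MeasurableSpace Ω] (c : ℝ) (P Q : Measure Ω) : ℝ :=
  min c (1 - c)
    - ∫ x, min ((1 - c) * ((Q.rnDeriv (P + Q)) x).toReal)
              (c * ((P.rnDeriv (P + Q)) x).toReal) ∂(P + Q)

/-!
The density `min ((1 - c) dν) (c dμ)` defines a measure `m` with `m ≤ c • μ` and `m ≤ (1 - c) • ν`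
whose total mass is `min c (1 - c) - Ifc c μ ν`. Pushing `m` through the estimator `κ` preserves
both inequalities and the mass. Hence two losses `f`, `g` with `r ≤ f + g` satisfy
`r * m(Ω) ≤ ∫ f + g d(κ ∘ₘ m) ≤ c ∫ f d(κ ∘ₘ μ) + (1 - c) ∫ g d(κ ∘ₘ ν)`, and for a pseudometric
the triangle inequality supplies `r = ρ θ θ'`.
-/

section

variable {Ω Θ : Type*} [MeasurableSpace Ω] [MeasurableSpace Θ]

theorem mul_measureReal_univ_le_integral_add_integral {m μ ν : Measure Ω} [IsFiniteMeasure m]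
    (hmμ : m ≤ μ) (hmν : m ≤ ν) {f g : Ω → ℝ} {r : ℝ} (hf : 0 ≤ f) (hg : 0 ≤ g)
    (hr : ∀ x, r ≤ f x + g x) (hfμ : Integrable f μ) (hgν : Integrable g ν) :
    r * m.real Set.univ ≤ ∫ x, f x ∂μ + ∫ x, g x ∂ν := by
  have hfm : Integrable f m := hfμ.mono_measure hmμ
  have hgm : Integrable g m := hgν.mono_measure hmν
  calc r * m.real Set.univ = ∫ _, r ∂m := by rw [integral_const, smul_eq_mul, mul_comm]
    _ ≤ ∫ x, (f x + g x) ∂m := integral_mono (integrable_const r) (hfm.add hgm) hr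
    _ = ∫ x, f x ∂m + ∫ x, g x ∂m := integral_add hfm hgm
    _ ≤ ∫ x, f x ∂μ + ∫ x, g x ∂ν :=
      add_le_add (integral_mono_measure hmμ (ae_of_all _ hf) hfμ)
        (integral_mono_measure hmν (ae_of_all _ hg) hgν)

theorem measure_comp_mono {μ ν : Measure Ω} (hμν : μ ≤ ν) (κ : Kernel Ω Θ) :
    κ ∘ₘ μ ≤ κ ∘ₘ ν := by
  refine Measure.le_iff.2 fun s hs ↦ ?_
  rw [Measure.bind_apply hs κ.aemeasurable, Measure.bind_apply hs κ.aemeasurable]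
  exact lintegral_mono' hμν le_rfl

theorem integral_measure_comp {μ : Measure Ω} {κ : Kernel Ω Θ} {E : Type*} [NormedAddCommGroup E]
    [NormedSpace ℝ E] {f : Θ → E} (hf : Integrable f (κ ∘ₘ μ)) :
    ∫ t, f t ∂(κ ∘ₘ μ) = ∫ o, ∫ t, f t ∂(κ o) ∂μ := by
  rw [Measure.comp_eq_comp_const_apply] at hf ⊢
  rw [Kernel.integral_comp hf, Kernel.const_apply]

theorem withDensity_le_smul_of_le_mul_rnDeriv {μ ξ : Measure Ω} {a : ℝ} (ha : 0 ≤ a) {d : Ω → ℝ}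
    (hd : ∀ x, d x ≤ a * (μ.rnDeriv ξ x).toReal) :
    ξ.withDensity (fun x ↦ ENNReal.ofReal (d x)) ≤ ENNReal.ofReal a • μ := by
  have hd' (x : Ω) : ENNReal.ofReal (d x) ≤ (ENNReal.ofReal a • μ.rnDeriv ξ) x :=
    calc ENNReal.ofReal (d x)
      _ ≤ ENNReal.ofReal a * ENNReal.ofReal (μ.rnDeriv ξ x).toReal := by
        rw [← ENNReal.ofReal_mul ha]
        exact ENNReal.ofReal_le_ofReal (hd x)
      _ ≤ ENNReal.ofReal a * μ.rnDeriv ξ x := by gcongr; exact ENNReal.ofReal_toReal_le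
  calc ξ.withDensity (fun x ↦ ENNReal.ofReal (d x))
    _ ≤ ξ.withDensity (ENNReal.ofReal a • μ.rnDeriv ξ) := withDensity_mono (ae_of_all _ hd')
    _ = ENNReal.ofReal a • ξ.withDensity (μ.rnDeriv ξ) :=
      withDensity_smul _ (Measure.measurable_rnDeriv μ ξ)
    _ ≤ ENNReal.ofReal a • μ := by gcongr; exact Measure.withDensity_rnDeriv_le μ ξ

/-- The measure `min ((1 - c) dν) (c dμ)`, a common minorant of `c • μ` and `(1 - c) • ν` for
`c ∈ [0, 1]`. Its density with respect to `μ + ν` is the integrand of `Ifc`, so its total mass is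
what `Ifc` subtracts from `min c (1 - c)`. -/
noncomputable def overlapMeasure (c : ℝ) (μ ν : Measure Ω) : Measure Ω :=
  (μ + ν).withDensity fun x ↦ ENNReal.ofReal
    (min ((1 - c) * (ν.rnDeriv (μ + ν) x).toReal) (c * (μ.rnDeriv (μ + ν) x).toReal))

theorem overlapMeasure_le_smul_left {c : ℝ} (hc : 0 ≤ c) (μ ν : Measure Ω) :
    overlapMeasure c μ ν ≤ ENNReal.ofReal c • μ :=
  withDensity_le_smul_of_le_mul_rnDeriv hc fun _ ↦ min_le_right _ _

theorem overlapMeasure_le_smul_right {c : ℝ} (hc : c ≤ 1) (μ ν : Measure Ω) :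
    overlapMeasure c μ ν ≤ ENNReal.ofReal (1 - c) • ν :=
  withDensity_le_smul_of_le_mul_rnDeriv (sub_nonneg.2 hc) fun _ ↦ min_le_left _ _

theorem overlapMeasure_real_univ {c : ℝ} (hc : c ∈ Set.Icc (0 : ℝ) 1) (μ ν : Measure Ω) :
    (overlapMeasure c μ ν).real Set.univ = min c (1 - c) - Ifc c μ ν := by
  have hc' : 0 ≤ 1 - c := sub_nonneg.2 hc.2
  rw [Ifc, sub_sub_cancel, integral_eq_lintegral_of_nonneg_ae, overlapMeasure, measureReal_def,
    withDensity_apply _ MeasurableSet.univ, Measure.restrict_univ]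
  · exact ae_of_all _ fun x ↦ le_min (mul_nonneg hc' ENNReal.toReal_nonneg)
      (mul_nonneg hc.1 ENNReal.toReal_nonneg)
  · exact Measurable.aestronglyMeasurable (by fun_prop)

theorem cost_weighted_two_point_bound_general (μ ν : Measure Ω) [IsFiniteMeasure μ]
    [IsFiniteMeasure ν] (κ : Kernel Ω Θ) [IsMarkovKernel κ] {f g : Θ → ℝ} {r c : ℝ}
    (hc : c ∈ Set.Icc (0 : ℝ) 1) (hf : 0 ≤ f) (hg : 0 ≤ g) (hr : ∀ t, r ≤ f t + g t)
    (hfμ : Integrable f (κ ∘ₘ μ)) (hgν : Integrable g (κ ∘ₘ ν)) :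
    r * (min c (1 - c) - Ifc c μ ν)
      ≤ c * ∫ o, ∫ t, f t ∂(κ o) ∂μ + (1 - c) * ∫ o, ∫ t, g t ∂(κ o) ∂ν := by
  set m := overlapMeasure c μ ν
  have hmμ : κ ∘ₘ m ≤ ENNReal.ofReal c • (κ ∘ₘ μ) := by
    simpa only [Measure.comp_smul] using
      measure_comp_mono (overlapMeasure_le_smul_left hc.1 μ ν) κ
  have hmν : κ ∘ₘ m ≤ ENNReal.ofReal (1 - c) • (κ ∘ₘ ν) := by
    simpa only [Measure.comp_smul] using
      measure_comp_mono (overlapMeasure_le_smul_right hc.2 μ ν) κ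
  have : IsFiniteMeasure (κ ∘ₘ m) :=
    have := Measure.smul_finite (κ ∘ₘ μ) (ENNReal.ofReal_ne_top (r := c))
    isFiniteMeasure_of_le _ hmμ
  have hmass : (κ ∘ₘ m).real Set.univ = min c (1 - c) - Ifc c μ ν := by
    rw [measureReal_def, Measure.comp_apply_univ, ← measureReal_def, overlapMeasure_real_univ hc]
  rw [← hmass, ← integral_measure_comp hfμ, ← integral_measure_comp hgν]
  simpa only [integral_smul_measure, smul_eq_mul, ENNReal.toReal_ofReal hc.1,
    ENNReal.toReal_ofReal (sub_nonneg.2 hc.2)] using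
    mul_measureReal_univ_le_integral_add_integral hmμ hmν hf hg hr
      (hfμ.smul_measure ENNReal.ofReal_ne_top) (hgν.smul_measure ENNReal.ofReal_ne_top)

end

/-- cost-weighted two-point risk bound. For any randomized estimator `κ`
(a Markov kernel from `Oⁿ` to the finite parameter space `Θ`), pseudometric `ρ`, and
parameters `θ ≠ θ'`:
`c·E_{P_θⁿ}E_{κ}[ρ(θ,·)] + (1−c)·E_{P_{θ'}ⁿ}E_{κ}[ρ(θ',·)] ≥ ρ(θ,θ')·(min(c,1−c) − I_{f_c}(P_θⁿ, P_{θ'}ⁿ))`. -/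
theorem cost_weighted_two_point_bound
    {O Θ : Type*} [MeasurableSpace O] [Fintype Θ] [MeasurableSpace Θ]
    [MeasurableSingletonClass Θ]
    (n : ℕ) (P : Θ → Measure O) [∀ θ, IsProbabilityMeasure (P θ)]
    (ρ : Θ → Θ → ℝ) (hρ_nonneg : ∀ a b, 0 ≤ ρ a b) (hρ_self : ∀ a, ρ a a = 0)
    (hρ_symm : ∀ a b, ρ a b = ρ b a) (hρ_tri : ∀ a b d, ρ a d ≤ ρ a b + ρ b d)
    (c : ℝ) (hc : c ∈ Set.Ioo (0 : ℝ) 1)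
    (θ θ' : Θ) (hθ : θ ≠ θ')
    (κ : Kernel (Fin n → O) Θ) [IsMarkovKernel κ] :
    c * ∫ o, (∫ t, ρ θ t ∂(κ o)) ∂(Measure.pi fun _ : Fin n => P θ)
      + (1 - c) * ∫ o, (∫ t, ρ θ' t ∂(κ o)) ∂(Measure.pi fun _ : Fin n => P θ')
    ≥ ρ θ θ' * (min c (1 - c)
        - Ifc c (Measure.pi fun _ : Fin n => P θ) (Measure.pi fun _ : Fin n => P θ')) :=
  cost_weighted_two_point_bound_general _ _ κ (Set.Ioo_subset_Icc_self hc) (hρ_nonneg θ)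
    (hρ_nonneg θ') (fun t ↦ hρ_symm θ' t ▸ hρ_tri θ t θ') Integrable.of_finite Integrable.of_finite
end

section
/- (Cost-dependent Le Cam bound.) Let Θ be a finite parameter space, ρ : Θ × Θ → ℝ₊ a pseudometric, and for each θ ∈ Θ let P_θⁿ be the n-fold product of a probability measure P_θ on an observation space O. For any c ∈ (0,1), the minimax risk R*_ρ := inf over randomized estimators θ̂ of sup over θ ∈ Θ of E_{O ∼ P_θⁿ} E_{θ̃ ∼ θ̂(O)}[ρ(θ, θ̃)] satisfies R*_ρ ≥ sup over pairs θ ≠ θ′ of ρ(θ, θ′) · ( min(c, 1−c) − I_{f_c}(P_θⁿ, P_{θ′}ⁿ) ). -/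
open MeasureTheory ProbabilityTheory

/-! Write `p`, `q` for the densities of `P a`, `P b` with respect to `P a + P b`. A randomized
estimate cannot be close to both `a` and `b`: by the triangle inequality its conditional expected
losses `f x` and `g x` against `a` and `b` satisfy `ρ a b ≤ f x + g x` at every observation `x`.
Hence `ρ a b * min ((1 - c) q) (c p) ≤ c p f + (1 - c) q g`, and integrating bounds the average
risk for the prior `(c, 1 - c)` on `{a, b}` from below; the maximal risk dominates it. -/

lemma mul_min_le_mul_add_mul {R : Type*} [CommSemiring R] [LinearOrder R] [IsOrderedRing R]
    {r x y u v : R} (hx : 0 ≤ x) (hy : 0 ≤ y) (hu : 0 ≤ u) (hv : 0 ≤ v) (hr : r ≤ x + y) :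
    r * min u v ≤ v * x + u * y :=
  calc r * min u v
      ≤ (x + y) * min u v := mul_le_mul_of_nonneg_right hr (le_min hu hv)
    _ = min u v * x + min u v * y := by ring
    _ ≤ v * x + u * y := by
      gcongr
      exacts [min_le_right u v, min_le_left u v]

lemma mul_min_sub_Ifc_le_integral_add_integral {Ω : Type*} [MeasurableSpace Ω] {P Q : Measure Ω}
    [IsFiniteMeasure P] [IsFiniteMeasure Q] {f g : Ω → ℝ} {r c : ℝ}
    (hc : c ∈ Set.Icc (0 : ℝ) 1) (hf : Integrable f P) (hg : Integrable g Q)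
    (hf_nonneg : 0 ≤ᵐ[P + Q] f) (hg_nonneg : 0 ≤ᵐ[P + Q] g)
    (hr : ∀ᵐ x ∂(P + Q), r ≤ f x + g x) :
    r * (min c (1 - c) - Ifc c P Q) ≤ c * ∫ x, f x ∂P + (1 - c) * ∫ x, g x ∂Q := by
  have hP : P ≪ P + Q := Measure.AbsolutelyContinuous.rfl.add_right Q
  have hQ : Q ≪ P + Q := Measure.le_add_left le_rfl |>.absolutelyContinuous
  set p : Ω → ℝ := fun x ↦ (P.rnDeriv (P + Q) x).toReal
  set q : Ω → ℝ := fun x ↦ (Q.rnDeriv (P + Q) x).toReal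
  have hp : Integrable p (P + Q) := Measure.integrable_toReal_rnDeriv
  have hq : Integrable q (P + Q) := Measure.integrable_toReal_rnDeriv
  have hpf : Integrable (fun x ↦ c * (p x * f x)) (P + Q) :=
    ((integrable_rnDeriv_smul_iff hP).2 hf).const_mul c
  have hqg : Integrable (fun x ↦ (1 - c) * (q x * g x)) (P + Q) :=
    ((integrable_rnDeriv_smul_iff hQ).2 hg).const_mul (1 - c)
  have pointwise : ∀ᵐ x ∂(P + Q), r * min ((1 - c) * q x) (c * p x) ≤
      c * (p x * f x) + (1 - c) * (q x * g x) := by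
    filter_upwards [hf_nonneg, hg_nonneg, hr] with x hfx hgx hrx
    rw [← mul_assoc, ← mul_assoc]
    exact mul_min_le_mul_add_mul hfx hgx
      (mul_nonneg (sub_nonneg.2 hc.2) ENNReal.toReal_nonneg)
      (mul_nonneg hc.1 ENNReal.toReal_nonneg) hrx
  calc r * (min c (1 - c) - Ifc c P Q)
      = ∫ x, r * min ((1 - c) * q x) (c * p x) ∂(P + Q) := by
        rw [Ifc, sub_sub_cancel, integral_const_mul]
    _ ≤ ∫ x, c * (p x * f x) + (1 - c) * (q x * g x) ∂(P + Q) :=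
        integral_mono_ae (((hq.const_mul (1 - c)).inf (hp.const_mul c)).const_mul r)
          (hpf.add hqg) pointwise
    _ = c * ∫ x, f x ∂P + (1 - c) * ∫ x, g x ∂Q := by
        rw [integral_add hpf hqg, integral_const_mul, integral_const_mul,
          integral_toReal_rnDeriv_mul hP, integral_toReal_rnDeriv_mul hQ]

section ProbabilityIntegral

variable {Ω : Type*} [MeasurableSpace Ω] {μ : Measure Ω} [IsProbabilityMeasure μ] {f g : Ω → ℝ}

lemma integral_mem_Icc_zero {C : ℝ} (hf : ∀ x, f x ∈ Set.Icc 0 C) :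
    ∫ x, f x ∂μ ∈ Set.Icc 0 C := by
  have norm_le : ∀ x, ‖f x‖ ≤ C := fun x ↦ (Real.norm_of_nonneg (hf x).1).trans_le (hf x).2
  refine ⟨integral_nonneg fun x ↦ (hf x).1, (Real.le_norm_self _).trans ?_⟩
  simpa using norm_integral_le_of_norm_le_const (μ := μ) (.of_forall norm_le)

lemma le_integral_add_integral {r : ℝ} (hf : Integrable f μ) (hg : Integrable g μ)
    (hr : ∀ᵐ x ∂μ, r ≤ f x + g x) : r ≤ ∫ x, f x ∂μ + ∫ x, g x ∂μ :=
  calc r = ∫ _, r ∂μ := by simp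
    _ ≤ ∫ x, f x + g x ∂μ := integral_mono_ae (integrable_const r) (hf.add hg) hr
    _ = ∫ x, f x ∂μ + ∫ x, g x ∂μ := integral_add hf hg

end ProbabilityIntegral

section Risk

variable {X Θ A : Type*} [MeasurableSpace X] [MeasurableSpace A]

/-- The risk at the parameter `θ` of the randomized estimator `κ`, for the loss `ℓ` and the
statistical model `P`. Estimates live in an arbitrary action space `A`. -/
noncomputable def estimatorRisk (ℓ : Θ → A → ℝ) (P : Θ → Measure X) (κ : Kernel X A) (θ : Θ) : ℝ :=
  ∫ x, ∫ t, ℓ θ t ∂(κ x) ∂(P θ)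

/-- The minimax risk over randomized estimators, a real-valued counterpart of
`ProbabilityTheory.minimaxRisk` that asks for no measurability in the parameter. The supremum takes
the junk value `0` when the risk is unbounded over `Θ`, and so does the infimum when there is no
Markov kernel from `X` to `A`. -/
noncomputable def realMinimaxRisk (ℓ : Θ → A → ℝ) (P : Θ → Measure X) : ℝ :=
  ⨅ κ : {κ : Kernel X A // IsMarkovKernel κ}, ⨆ θ, estimatorRisk ℓ P κ.1 θ

variable {ℓ : Θ → A → ℝ} {P : Θ → Measure X}

lemma realMinimaxRisk_nonneg (hℓ : ∀ θ t, 0 ≤ ℓ θ t) : 0 ≤ realMinimaxRisk ℓ P :=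
  Real.iInf_nonneg fun _ ↦ Real.iSup_nonneg fun θ ↦
    integral_nonneg fun _ ↦ integral_nonneg fun t ↦ hℓ θ t

variable {κ : Kernel X A} [IsMarkovKernel κ] {C c : ℝ}

lemma bddAbove_range_estimatorRisk [∀ θ, IsProbabilityMeasure (P θ)]
    (hℓ : ∀ θ t, ℓ θ t ∈ Set.Icc 0 C) : BddAbove (Set.range (estimatorRisk ℓ P κ)) :=
  ⟨C, Set.forall_mem_range.2 fun θ ↦
    (integral_mem_Icc_zero fun _ ↦ integral_mem_Icc_zero (hℓ θ)).2⟩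

lemma integrable_integral_kernel_of_mem_Icc {μ : Measure X} [IsFiniteMeasure μ] {f : A → ℝ}
    (hf_meas : Measurable f) (hf : ∀ t, f t ∈ Set.Icc 0 C) :
    Integrable (fun x ↦ ∫ t, f t ∂(κ x)) μ :=
  .of_mem_Icc 0 C hf_meas.stronglyMeasurable.integral_kernel.measurable.aemeasurable
    (.of_forall fun _ ↦ integral_mem_Icc_zero hf)

lemma mul_min_sub_Ifc_le_estimatorRisk_add_estimatorRisk {a b : Θ} {r : ℝ}
    [IsFiniteMeasure (P a)] [IsFiniteMeasure (P b)]
    (ha_meas : Measurable (ℓ a)) (hb_meas : Measurable (ℓ b))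
    (ha : ∀ t, ℓ a t ∈ Set.Icc 0 C) (hb : ∀ t, ℓ b t ∈ Set.Icc 0 C)
    (hc : c ∈ Set.Icc (0 : ℝ) 1) (hr : ∀ t, r ≤ ℓ a t + ℓ b t) :
    r * (min c (1 - c) - Ifc c (P a) (P b)) ≤
      c * estimatorRisk ℓ P κ a + (1 - c) * estimatorRisk ℓ P κ b := by
  have integrable_loss {f : A → ℝ} (hf_meas : Measurable f) (hf : ∀ t, f t ∈ Set.Icc 0 C) (x : X) :
      Integrable f (κ x) :=
    .of_mem_Icc 0 C hf_meas.aemeasurable (.of_forall hf)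
  exact mul_min_sub_Ifc_le_integral_add_integral hc
    (integrable_integral_kernel_of_mem_Icc ha_meas ha)
    (integrable_integral_kernel_of_mem_Icc hb_meas hb)
    (.of_forall fun _ ↦ integral_nonneg fun t ↦ (ha t).1)
    (.of_forall fun _ ↦ integral_nonneg fun t ↦ (hb t).1)
    (.of_forall fun x ↦ le_integral_add_integral (integrable_loss ha_meas ha x)
      (integrable_loss hb_meas hb x) (.of_forall hr))

theorem cost_dependent_le_cam_bound_general [Nonempty A] [∀ θ, IsProbabilityMeasure (P θ)]
    (hℓ_meas : ∀ θ, Measurable (ℓ θ)) (hℓ : ∀ θ t, ℓ θ t ∈ Set.Icc 0 C)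
    (hc : c ∈ Set.Icc (0 : ℝ) 1) (a b : Θ) {r : ℝ} (hr : ∀ t, r ≤ ℓ a t + ℓ b t) :
    r * (min c (1 - c) - Ifc c (P a) (P b)) ≤ realMinimaxRisk ℓ P := by
  have : Nonempty {κ : Kernel X A // IsMarkovKernel κ} :=
    ⟨Kernel.const X (Measure.dirac (Classical.arbitrary A)), inferInstance⟩
  refine le_ciInf fun ⟨κ, hκ⟩ ↦ ?_
  have risk_le_iSup := le_ciSup (bddAbove_range_estimatorRisk (P := P) (κ := κ) hℓ)
  calc r * (min c (1 - c) - Ifc c (P a) (P b))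
      ≤ c * estimatorRisk ℓ P κ a + (1 - c) * estimatorRisk ℓ P κ b :=
        mul_min_sub_Ifc_le_estimatorRisk_add_estimatorRisk (hℓ_meas a) (hℓ_meas b)
          (hℓ a) (hℓ b) hc hr
    _ ≤ ⨆ θ, estimatorRisk ℓ P κ θ :=
        (convex_Iic (⨆ θ, estimatorRisk ℓ P κ θ)) (risk_le_iSup a) (risk_le_iSup b)
          hc.1 (sub_nonneg.2 hc.2) (add_sub_cancel c 1)

end Risk

/-- cost-dependent Le Cam bound. The minimax risk
`R*_ρ = inf_κ sup_θ E_{O∼P_θⁿ} E_{θ̃∼κ(O)}[ρ(θ,θ̃)]` over randomized estimators (Markov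
kernels from `Oⁿ` to the finite parameter space `Θ`) satisfies
`R*_ρ ≥ sup_{θ ≠ θ'} ρ(θ,θ')·(min(c,1−c) − I_{f_c}(P_θⁿ, P_{θ'}ⁿ))`. -/
theorem cost_dependent_le_cam_bound
    {O Θ : Type*} [MeasurableSpace O] [Fintype Θ] [MeasurableSpace Θ]
    [MeasurableSingletonClass Θ]
    (n : ℕ) (P : Θ → Measure O) [∀ θ, IsProbabilityMeasure (P θ)]
    (ρ : Θ → Θ → ℝ) (hρ_nonneg : ∀ a b, 0 ≤ ρ a b) (hρ_self : ∀ a, ρ a a = 0)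
    (hρ_symm : ∀ a b, ρ a b = ρ b a) (hρ_tri : ∀ a b d, ρ a d ≤ ρ a b + ρ b d)
    (c : ℝ) (hc : c ∈ Set.Ioo (0 : ℝ) 1) :
    (⨅ κ : {κ : Kernel (Fin n → O) Θ // IsMarkovKernel κ},
      ⨆ θ : Θ, ∫ o, (∫ t, ρ θ t ∂(κ.1 o)) ∂(Measure.pi fun _ : Fin n => P θ))
    ≥ ⨆ p : {p : Θ × Θ // p.1 ≠ p.2},
        ρ p.1.1 p.1.2 * (min c (1 - c)
          - Ifc c (Measure.pi fun _ : Fin n => P p.1.1)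
                  (Measure.pi fun _ : Fin n => P p.1.2)) := by
  obtain ⟨C, hC⟩ := (Set.finite_range fun p : Θ × Θ ↦ ρ p.1 p.2).bddAbove
  refine Real.iSup_le (fun ⟨(a, b), _⟩ ↦ ?_) (realMinimaxRisk_nonneg hρ_nonneg)
  have : Nonempty Θ := ⟨a⟩
  exact cost_dependent_le_cam_bound_general (P := fun θ ↦ Measure.pi fun _ : Fin n ↦ P θ)
    (fun θ ↦ measurable_of_finite (ρ θ)) (fun θ t ↦ ⟨hρ_nonneg θ t, hC ⟨(θ, t), rfl⟩⟩)
    (Set.Ioo_subset_Icc_self hc) a b fun t ↦ (hρ_tri a t b).trans_eq (by rw [hρ_symm t b])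
end

section
/- (Cost-dependent Assouad lemma.) Let d ∈ ℕ, let the parameter space be the hypercube Θ = {−1,1}^d, and for each θ ∈ Θ let P_θⁿ be the n-fold product of a probability measure P_θ on an observation space O. Let ρ_Ha(θ, θ′) := Σ_{i=1}^d 1[θ_i ≠ θ′_i] be the Hamming distance. Then for any c ∈ (0,1), the minimax risk R*_{ρ_Ha} := inf over randomized estimators θ̂ of max over θ ∈ Θ of E_{O ∼ P_θⁿ} E_{θ̃ ∼ θ̂(O)}[ρ_Ha(θ, θ̃)] satisfies R*_{ρ_Ha} ≥ d · ( min(c, 1−c) − max over pairs θ, θ′ with ρ_Ha(θ, θ′) = 1 of I_{f_c}(P_θⁿ, P_{θ′}ⁿ) ). -/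
open MeasureTheory ProbabilityTheory

/-!
Draw `θ` from the product prior whose coordinates are `true` with probability `c`. The minimax risk
is at least the risk averaged over this prior, and the Hamming loss splits that average into one
term per coordinate. Resampling coordinate `i` leaves the prior invariant, so the `i`-th term is an
average over `θ` of the risk of a binary test, with prior `(c, 1 - c)`, between two parameters that
differ in coordinate `i` only. The optimal such risk is `min c (1 - c) - Ifc c P Q`.
-/

section ProductWeight

variable {ι : Type*} [Fintype ι] {β : ι → Type*}

/-- The weight function on `∀ i, β i` of independent coordinates with marginal weights `w i`: the
product prior of the Bayesian argument. -/
def productWeight (w : ∀ i, β i → ℝ) (θ : ∀ i, β i) : ℝ :=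
  ∏ i, w i (θ i)

theorem productWeight_update_mul [DecidableEq ι] (w : ∀ i, β i → ℝ) (θ : ∀ i, β i) (i : ι)
    (b : β i) :
    productWeight w (Function.update θ i b) * w i (θ i) = productWeight w θ * w i b := by
  have split_coord (η : ∀ j, β j) :
      productWeight w η = w i (η i) * ∏ j ∈ Finset.univ.erase i, w j (η j) :=
    (Finset.mul_prod_erase _ _ (Finset.mem_univ i)).symm
  have other_coords : ∏ j ∈ Finset.univ.erase i, w j (Function.update θ i b j)
      = ∏ j ∈ Finset.univ.erase i, w j (θ j) :=
    Finset.prod_congr rfl fun j hj => by rw [Function.update_of_ne (Finset.ne_of_mem_erase hj)]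
  rw [split_coord, split_coord θ, other_coords, Function.update_self]
  ring

theorem productWeight_mem_stdSimplex [DecidableEq ι] [∀ i, Fintype (β i)] {w : ∀ i, β i → ℝ}
    (hw : ∀ i, w i ∈ stdSimplex ℝ (β i)) : productWeight w ∈ stdSimplex ℝ (∀ i, β i) := by
  refine ⟨fun θ => Finset.prod_nonneg fun i _ => (hw i).1 (θ i), ?_⟩
  calc ∑ θ, productWeight w θ = ∏ i, ∑ b, w i b := (Fintype.prod_sum w).symm
    _ = 1 := Finset.prod_eq_one fun i _ => (hw i).2

theorem sum_productWeight_mul_eq_sum_update [DecidableEq ι] [∀ i, Fintype (β i)]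
    (w : ∀ i, β i → ℝ) (i : ι) (hw : ∑ b, w i b = 1) (f : (∀ j, β j) → ℝ) :
    ∑ θ, productWeight w θ * f θ
      = ∑ θ, productWeight w θ * ∑ b, w i b * f (Function.update θ i b) := by
  -- Exchanging the fresh value `b` with the old value `θ i` preserves the joint weight of `(θ, b)`.
  let exchange : (∀ j, β j) × β i → (∀ j, β j) × β i := fun p =>
    (Function.update p.1 i p.2, p.1 i)
  have exchange_involutive : Function.Involutive exchange := fun p => by simp [exchange]
  calc ∑ θ, productWeight w θ * f θ
      = ∑ p : (∀ j, β j) × β i, productWeight w p.1 * w i p.2 * f p.1 := by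
        simp_rw [Fintype.sum_prod_type, mul_right_comm _ (w i _), ← Finset.mul_sum, hw, mul_one]
    _ = ∑ p : (∀ j, β j) × β i,
          productWeight w p.1 * w i p.2 * f (Function.update p.1 i p.2) := by
        rw [← Equiv.sum_comp exchange_involutive.toPerm]
        exact Finset.sum_congr rfl fun p _ =>
          congrArg (· * f (Function.update p.1 i p.2)) (productWeight_update_mul w p.1 i p.2)
    _ = ∑ θ, productWeight w θ * ∑ b, w i b * f (Function.update θ i b) := by
        simp_rw [Fintype.sum_prod_type, mul_assoc, ← Finset.mul_sum]

theorem sum_mul_le_iSup_of_mem_stdSimplex {Θ : Type*} [Fintype Θ] {w : Θ → ℝ}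
    (hw : w ∈ stdSimplex ℝ Θ) (f : Θ → ℝ) : ∑ θ, w θ * f θ ≤ ⨆ θ, f θ := by
  calc ∑ θ, w θ * f θ ≤ ∑ θ, w θ * ⨆ η, f η := Finset.sum_le_sum fun θ _ =>
        mul_le_mul_of_nonneg_left (le_ciSup (Set.finite_range f).bddAbove θ) (hw.1 θ)
    _ = ⨆ θ, f θ := by rw [← Finset.sum_mul, hw.2, one_mul]

theorem sum_le_iSup_sum_of_forall_le_sum_update [DecidableEq ι] [∀ i, Fintype (β i)]
    {w : ∀ i, β i → ℝ} (hw : ∀ i, w i ∈ stdSimplex ℝ (β i)) {a : ι → ℝ}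
    {f : ι → (∀ i, β i) → ℝ} (h : ∀ i θ, a i ≤ ∑ b, w i b * f i (Function.update θ i b)) :
    ∑ i, a i ≤ ⨆ θ, ∑ i, f i θ := by
  have hprior := productWeight_mem_stdSimplex hw
  have coordinate_le (i : ι) : a i ≤ ∑ θ, productWeight w θ * f i θ := by
    calc a i = ∑ θ, productWeight w θ * a i := by rw [← Finset.sum_mul, hprior.2, one_mul]
      _ ≤ ∑ θ, productWeight w θ * ∑ b, w i b * f i (Function.update θ i b) :=
        Finset.sum_le_sum fun θ _ => mul_le_mul_of_nonneg_left (h i θ) (hprior.1 θ)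
      _ = ∑ θ, productWeight w θ * f i θ :=
        (sum_productWeight_mul_eq_sum_update w i (hw i).2 (f i)).symm
  calc ∑ i, a i ≤ ∑ i, ∑ θ, productWeight w θ * f i θ :=
        Finset.sum_le_sum fun i _ => coordinate_le i
    _ = ∑ θ, productWeight w θ * ∑ i, f i θ := by
        simp_rw [Finset.mul_sum]
        exact Finset.sum_comm
    _ ≤ ⨆ θ, ∑ i, f i θ := sum_mul_le_iSup_of_mem_stdSimplex hprior _

end ProductWeight

section BinaryTesting

variable {Ω : Type*} [MeasurableSpace Ω]

theorem min_sub_Ifc_le_integral_add_integral (c : ℝ) (μ ν : Measure Ω) [IsFiniteMeasure μ]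
    [IsFiniteMeasure ν] {φ : Ω → ℝ} (hφ : Measurable φ) (hφ01 : ∀ x, φ x ∈ Set.Icc 0 1) :
    min c (1 - c) - Ifc c μ ν ≤ c * ∫ x, φ x ∂μ + (1 - c) * ∫ x, (1 - φ x) ∂ν := by
  have hμ : μ ≪ μ + ν := Measure.absolutelyContinuous_of_le (Measure.le_add_right le_rfl)
  have hν : ν ≪ μ + ν := Measure.absolutelyContinuous_of_le (Measure.le_add_left le_rfl)
  have hφ_int (ρ : Measure Ω) [IsFiniteMeasure ρ] : Integrable φ ρ :=
    Integrable.of_mem_Icc 0 1 hφ.aemeasurable (.of_forall hφ01)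
  have hμ_int := ((integrable_rnDeriv_smul_iff hμ).2 (hφ_int μ)).const_mul c
  have hν_int := ((integrable_rnDeriv_smul_iff (f := fun x => 1 - φ x) hν).2
    ((integrable_const 1).sub (hφ_int ν))).const_mul (1 - c)
  rw [Ifc, sub_sub_cancel, ← integral_rnDeriv_smul hμ, ← integral_rnDeriv_smul hν,
    ← integral_const_mul, ← integral_const_mul, ← integral_add hμ_int hν_int]
  refine integral_mono ((Measure.integrable_toReal_rnDeriv.const_mul _).inf
    (Measure.integrable_toReal_rnDeriv.const_mul _)) (hμ_int.add hν_int) fun x => ?_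
  set p := (μ.rnDeriv (μ + ν) x).toReal
  set q := (ν.rnDeriv (μ + ν) x).toReal
  calc min ((1 - c) * q) (c * p)
      = φ x * min ((1 - c) * q) (c * p) + (1 - φ x) * min ((1 - c) * q) (c * p) := by ring
    _ ≤ φ x * (c * p) + (1 - φ x) * ((1 - c) * q) :=
        add_le_add (mul_le_mul_of_nonneg_left (min_le_right _ _) (hφ01 x).1)
          (mul_le_mul_of_nonneg_left (min_le_left _ _) (sub_nonneg.2 (hφ01 x).2))
    _ = c * (p • φ x) + (1 - c) * (q • (1 - φ x)) := by simp only [smul_eq_mul]; ring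

theorem min_sub_Ifc_le_integral_kernel_add_integral_kernel_compl {T : Type*} [MeasurableSpace T]
    (c : ℝ) (μ ν : Measure Ω) [IsFiniteMeasure μ] [IsFiniteMeasure ν] (κ : Kernel Ω T)
    [IsMarkovKernel κ] {A : Set T} (hA : MeasurableSet A) :
    min c (1 - c) - Ifc c μ ν
      ≤ c * ∫ o, (κ o).real A ∂μ + (1 - c) * ∫ o, (κ o).real Aᶜ ∂ν := by
  simp_rw [probReal_compl_eq_one_sub hA]
  exact min_sub_Ifc_le_integral_add_integral c μ ν (κ.measurable_coe hA).ennreal_toReal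
    fun _ => ⟨measureReal_nonneg, measureReal_le_one⟩

end BinaryTesting

section HammingRisk

variable {ι : Type*} {β : ι → Type*}

theorem hammingDist_update_update [Fintype ι] [DecidableEq ι] [∀ i, DecidableEq (β i)]
    (θ : ∀ i, β i) (i : ι) {b b' : β i} (h : b ≠ b') :
    hammingDist (Function.update θ i b) (Function.update θ i b') = 1 := by
  refine Finset.card_eq_one.2 ⟨i, ?_⟩
  ext j
  rcases eq_or_ne j i with rfl | hj
  · simp [h]
  · simp [hj]

variable {Ω : Type*} [MeasurableSpace Ω] [∀ i, MeasurableSpace (β i)]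

/-- The risk of the randomized estimator `κ` at the parameter `θ` and observation law `μ` under the
`0`-`1` loss on coordinate `i`. -/
noncomputable def coordinateRisk (κ : Kernel Ω (∀ i, β i)) (μ : Measure Ω) (θ : ∀ i, β i) (i : ι) :
    ℝ :=
  ∫ o, (κ o).real {t | t i ≠ θ i} ∂μ

theorem measurableSet_setOf_apply_ne (i : ι) [MeasurableSingletonClass (β i)] (b : β i) :
    MeasurableSet {t : ∀ i, β i | t i ≠ b} :=
  (measurableSet_singleton b).compl.preimage (measurable_pi_apply i)

theorem integral_hammingDist [Fintype ι] [∀ i, DecidableEq (β i)]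
    [∀ i, MeasurableSingletonClass (β i)] (m : Measure (∀ i, β i)) [IsFiniteMeasure m]
    (θ : ∀ i, β i) :
    ∫ t, (hammingDist θ t : ℝ) ∂m = ∑ i, m.real {t | t i ≠ θ i} := by
  have hammingDist_eq_sum (t : ∀ i, β i) :
      (hammingDist θ t : ℝ) = ∑ i, {t : ∀ i, β i | t i ≠ θ i}.indicator 1 t := by
    rw [hammingDist_comm]
    simp [hammingDist, Set.indicator_apply, Finset.card_filter]
  simp_rw [hammingDist_eq_sum]
  rw [integral_finsetSum _ fun i _ =>
    (integrable_const 1).indicator (measurableSet_setOf_apply_ne i (θ i))]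
  exact Finset.sum_congr rfl fun i _ =>
    integral_indicator_one (measurableSet_setOf_apply_ne i (θ i))

theorem integral_integral_hammingDist_eq_sum_coordinateRisk [Fintype ι] [∀ i, DecidableEq (β i)]
    [∀ i, MeasurableSingletonClass (β i)] (κ : Kernel Ω (∀ i, β i)) [IsFiniteKernel κ]
    (μ : Measure Ω) [IsFiniteMeasure μ] (θ : ∀ i, β i) :
    ∫ o, ∫ t, (hammingDist θ t : ℝ) ∂(κ o) ∂μ = ∑ i, coordinateRisk κ μ θ i := by
  simp_rw [integral_hammingDist]
  exact integral_finsetSum _ fun i _ =>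
    Kernel.IsFiniteKernel.integrable μ κ (measurableSet_setOf_apply_ne i (θ i))

end HammingRisk

section Assouad

variable {ι Ω : Type*} [MeasurableSpace Ω] (Q : (ι → Bool) → Measure Ω)
  [∀ θ, IsFiniteMeasure (Q θ)]

theorem min_sub_Ifc_le_coordinateRisk_update [DecidableEq ι] (κ : Kernel Ω (ι → Bool))
    [IsMarkovKernel κ] (c : ℝ) (θ : ι → Bool) (i : ι) :
    min c (1 - c) - Ifc c (Q (Function.update θ i true)) (Q (Function.update θ i false))
      ≤ c * coordinateRisk κ (Q (Function.update θ i true)) (Function.update θ i true) i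
        + (1 - c)
          * coordinateRisk κ (Q (Function.update θ i false)) (Function.update θ i false) i := by
  have compl_eq : {t : ι → Bool | t i ≠ false} = {t | t i ≠ true}ᶜ := by ext; simp
  simp only [coordinateRisk, Function.update_self, compl_eq]
  exact min_sub_Ifc_le_integral_kernel_add_integral_kernel_compl c _ _ κ
    (measurableSet_setOf_apply_ne (β := fun _ => Bool) i true)

theorem card_mul_le_iSup_integral_hammingDist [Fintype ι] (κ : Kernel Ω (ι → Bool))
    [IsMarkovKernel κ] {c : ℝ} (hc : c ∈ Set.Icc (0 : ℝ) 1) :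
    Fintype.card ι * (min c (1 - c)
        - ⨆ q : {q : (ι → Bool) × (ι → Bool) // hammingDist q.1 q.2 = 1},
            Ifc c (Q q.1.1) (Q q.1.2))
      ≤ ⨆ θ, ∫ o, ∫ t, (hammingDist θ t : ℝ) ∂(κ o) ∂(Q θ) := by
  classical
  let divergence (q : {q : (ι → Bool) × (ι → Bool) // hammingDist q.1 q.2 = 1}) : ℝ :=
    Ifc c (Q q.1.1) (Q q.1.2)
  let w : Bool → ℝ := fun b => bif b then c else 1 - c
  have hw : w ∈ stdSimplex ℝ Bool :=
    ⟨Bool.forall_bool.2 ⟨sub_nonneg.2 hc.2, hc.1⟩, by simp [w]⟩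
  have coordinate_le (i : ι) (θ : ι → Bool) : min c (1 - c) - ⨆ q, divergence q
      ≤ ∑ b, w b * coordinateRisk κ (Q (Function.update θ i b)) (Function.update θ i b) i := by
    have divergence_le := le_ciSup (Set.finite_range divergence).bddAbove
      ⟨(Function.update θ i true, Function.update θ i false),
        hammingDist_update_update θ i (by decide)⟩
    rw [Fintype.sum_bool]
    exact (sub_le_sub_left divergence_le _).trans (min_sub_Ifc_le_coordinateRisk_update Q κ c θ i)
  calc Fintype.card ι * (min c (1 - c) - ⨆ q, divergence q)
      = ∑ _i : ι, (min c (1 - c) - ⨆ q, divergence q) := by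
        rw [Finset.sum_const, Finset.card_univ, nsmul_eq_mul]
    _ ≤ ⨆ θ, ∑ i, coordinateRisk κ (Q θ) θ i :=
        sum_le_iSup_sum_of_forall_le_sum_update (fun _ => hw)
          (f := fun i θ => coordinateRisk κ (Q θ) θ i) coordinate_le
    _ = ⨆ θ, ∫ o, ∫ t, (hammingDist θ t : ℝ) ∂(κ o) ∂(Q θ) := by
        simp_rw [integral_integral_hammingDist_eq_sum_coordinateRisk]

theorem cost_dependent_assouad_general [Fintype ι] {c : ℝ} (hc : c ∈ Set.Icc (0 : ℝ) 1) :
    Fintype.card ι * (min c (1 - c)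
        - ⨆ q : {q : (ι → Bool) × (ι → Bool) // hammingDist q.1 q.2 = 1},
            Ifc c (Q q.1.1) (Q q.1.2))
      ≤ ⨅ κ : {κ : Kernel Ω (ι → Bool) // IsMarkovKernel κ},
          ⨆ θ, ∫ o, ∫ t, (hammingDist θ t : ℝ) ∂(κ.1 o) ∂(Q θ) := by
  have : Nonempty {κ : Kernel Ω (ι → Bool) // IsMarkovKernel κ} :=
    ⟨Kernel.const _ (Measure.dirac fun _ => true), inferInstance⟩
  exact le_ciInf fun ⟨κ, _⟩ => card_mul_le_iSup_integral_hammingDist Q κ hc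

end Assouad

/-- cost-dependent Assouad lemma. With parameter space the hypercube
`{−1,1}^d` (encoded as `Fin d → Bool`) and Hamming loss `ρ_Ha = hammingDist`, the minimax
risk over randomized estimators (Markov kernels from `Oⁿ` to the hypercube) satisfies
`R*_{ρ_Ha} ≥ d·(min(c,1−c) − max_{ρ_Ha(θ,θ')=1} I_{f_c}(P_θⁿ, P_{θ'}ⁿ))`. -/
theorem cost_dependent_assouad
    {O : Type*} [MeasurableSpace O] (d n : ℕ)
    (P : (Fin d → Bool) → Measure O) [∀ θ, IsProbabilityMeasure (P θ)]
    (c : ℝ) (hc : c ∈ Set.Ioo (0 : ℝ) 1) :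
    (⨅ κ : {κ : Kernel (Fin n → O) (Fin d → Bool) // IsMarkovKernel κ},
      ⨆ θ : Fin d → Bool,
        ∫ o, (∫ t, (hammingDist θ t : ℝ) ∂(κ.1 o)) ∂(Measure.pi fun _ : Fin n => P θ))
    ≥ d * (min c (1 - c)
        - ⨆ q : {q : (Fin d → Bool) × (Fin d → Bool) // hammingDist q.1 q.2 = 1},
            Ifc c (Measure.pi fun _ : Fin n => P q.1.1)
                  (Measure.pi fun _ : Fin n => P q.1.2)) := by
  simpa only [Fintype.card_fin] using
    cost_dependent_assouad_general (fun θ => Measure.pi fun _ : Fin n => P θ)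
      (Set.Ioo_subset_Icc_self hc)
end
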